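/- Let F be a field, V a finite set, A a skew-symmetric matrix over F indexed by V, and T ⊆ V. Let k be the maximum of |S ∩ T| over all S ⊆ V with A[S] nonsingular, and let B ⊆ V be minimal under inclusion among sets satisfying: A[B] is nonsingular and |B ∩ T| = k. Then: (i) |B| ≤ 2k; (ii) for all distinct u, v ∈ B ∖ T, the principal submatrix A[B ∖ {u,v}] is singular; and (iii) for all u ∈ T ∖ B and v ∈ V ∖ B with u ≠ v, the principal submatrix A[B ∪ {u,v}] is singular. -/

import Mathlib

/-- The principal submatrix `A[S]` of a matrix `A` indexed by `V`, for `S ⊆ V`. -/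
def principalSub {V F : Type*} (A : Matrix V V F) (S : Finset V) : Matrix ↥S ↥S F :=
  A.submatrix (fun x => (x : V)) (fun x => (x : V))

/-! For alternating `M = A[B]` with determinant `d` and adjugate `N`, Jacobi's identity on
complementary minors gives `(d * N u v) ^ 2 = d ^ 3 * det A[B ∖ {u, v}]`. Minimality of `B` makes
the right-hand side vanish for distinct `u, v ∈ B ∖ T`, so the matrix `d • N`, whose determinant is
a power of `d`, vanishes on `(B ∖ T) × (B ∖ T)`. Some term of its Leibniz expansion is nonzero, and
the permutation of that term sends `B ∖ T` injectively into `B ∩ T`, whence `|B| ≤ 2 |B ∩ T|`. -/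

open Matrix Finset

section Determinant

variable {m n R : Type*} [CommRing R] [Fintype m] [DecidableEq m] [Fintype n] [DecidableEq n]

theorem exists_perm_forall_ne_zero_of_det_ne_zero {M : Matrix n n R} (hM : M.det ≠ 0) :
    ∃ σ : Equiv.Perm n, ∀ i, M (σ i) i ≠ 0 := by
  rw [det_apply] at hM
  obtain ⟨σ, -, hσ⟩ := exists_ne_zero_of_sum_ne_zero hM
  refine ⟨σ, fun i hi => hσ ?_⟩
  rw [prod_eq_zero (f := fun i => M (σ i) i) (mem_univ i) hi, smul_zero]

theorem two_mul_card_le_of_det_ne_zero_of_block_eq_zero {M : Matrix n n R} (hM : M.det ≠ 0)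
    {s : Finset n} (hs : ∀ i ∈ s, ∀ j ∈ s, M i j = 0) : 2 * #s ≤ Fintype.card n := by
  obtain ⟨σ, hσ⟩ := exists_perm_forall_ne_zero_of_det_ne_zero hM
  have hmaps : ∀ j ∈ s, σ j ∈ sᶜ := fun j hj =>
    mem_compl.2 fun hσj => hσ j (hs _ hσj _ hj)
  have hle : #s ≤ #sᶜ := card_le_card_of_injOn σ hmaps σ.injective.injOn
  have hsplit := card_add_card_compl s
  lia

/-- Jacobi's identity on complementary minors. -/
theorem det_mul_det_toBlocks₁₁_adjugate (M : Matrix (m ⊕ n) (m ⊕ n) R) :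
    M.det * M.adjugate.toBlocks₁₁.det = M.det ^ Fintype.card m * M.toBlocks₂₂.det := by
  have hmul : M * fromBlocks M.adjugate.toBlocks₁₁ 0 M.adjugate.toBlocks₂₁ 1 =
      fromBlocks (M.det • 1) M.toBlocks₁₂ 0 M.toBlocks₂₂ := by
    have hadj : fromBlocks M.toBlocks₁₁ M.toBlocks₁₂ M.toBlocks₂₁ M.toBlocks₂₂ *
        fromBlocks M.adjugate.toBlocks₁₁ M.adjugate.toBlocks₁₂ M.adjugate.toBlocks₂₁
          M.adjugate.toBlocks₂₂ = fromBlocks (M.det • 1) (M.det • 0) (M.det • 0) (M.det • 1) := by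
      rw [fromBlocks_toBlocks, fromBlocks_toBlocks, mul_adjugate, ← fromBlocks_smul, fromBlocks_one]
    rw [fromBlocks_multiply, fromBlocks_inj] at hadj
    obtain ⟨h₁₁, -, h₂₁, -⟩ := hadj
    nth_rw 1 [← fromBlocks_toBlocks M]
    rw [fromBlocks_multiply, h₁₁, h₂₁]
    simp only [Matrix.mul_zero, Matrix.mul_one, zero_add, smul_zero]
  simpa only [det_mul, det_fromBlocks_zero₁₂, det_fromBlocks_zero₂₁, det_one, mul_one, det_smul]
    using congrArg det hmul

end Determinant

/-- An alternating matrix: skew-symmetric with zero diagonal. In characteristic two the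
second condition does not follow from the first. -/
structure IsAlternatingMatrix {n R : Type*} [Zero R] [Neg R] (M : Matrix n n R) : Prop where
  skew : ∀ i j, M i j = -M j i
  diag : ∀ i, M i i = 0

namespace IsAlternatingMatrix

variable {m n R : Type*}

section Neg

variable [Zero R] [Neg R] {M : Matrix n n R}

theorem transpose_eq_neg (hM : IsAlternatingMatrix M) : Mᵀ = -M := by
  ext i j
  exact hM.skew j i

theorem transpose (hM : IsAlternatingMatrix M) : IsAlternatingMatrix Mᵀ :=
  ⟨fun i j => hM.skew j i, hM.diag⟩

theorem submatrix (hM : IsAlternatingMatrix M) (f : m → n) :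
    IsAlternatingMatrix (M.submatrix f f) :=
  ⟨fun i j => hM.skew (f i) (f j), fun i => hM.diag (f i)⟩

end Neg

variable [CommRing R] {M : Matrix n n R}

theorem det_fin_two {M : Matrix (Fin 2) (Fin 2) R} (hM : IsAlternatingMatrix M) :
    M.det = M 0 1 ^ 2 := by
  rw [Matrix.det_fin_two, hM.diag 0, hM.skew 1 0]
  ring

variable [Fintype n]

theorem dotProduct_mulVec_self (hM : IsAlternatingMatrix M) (x : n → R) : x ⬝ᵥ M *ᵥ x = 0 := by
  simp only [dotProduct, mulVec, mul_sum]
  rw [← Fintype.sum_prod_type']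
  refine sum_involution (fun p _ => p.swap) ?_ ?_ (fun _ _ => mem_univ _) (fun p _ => p.swap_swap)
  · rintro ⟨i, j⟩ -
    simp only [Prod.fst_swap, Prod.snd_swap, hM.skew i j]
    ring
  · rintro ⟨i, j⟩ - hij hswap
    obtain rfl : j = i := congrArg Prod.fst hswap
    simp [hM.diag] at hij

theorem mul_mul_transpose (hM : IsAlternatingMatrix M) (P : Matrix m n R) :
    IsAlternatingMatrix (P * M * Pᵀ) where
  skew i j := by
    have htranspose : (P * M * Pᵀ)ᵀ = -(P * M * Pᵀ) := by
      simp only [transpose_mul, transpose_transpose, hM.transpose_eq_neg, Matrix.mul_assoc,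
        Matrix.neg_mul, Matrix.mul_neg]
    exact congrFun₂ htranspose j i
  diag i := calc
    (P * M * Pᵀ) i i = (P * (M * Pᵀ)) i i := by rw [Matrix.mul_assoc]
    _ = P i ⬝ᵥ M *ᵥ P i := rfl
    _ = 0 := hM.dotProduct_mulVec_self (P i)

variable [DecidableEq n]

-- The factor `M.det` is needed: the adjugate of an alternating matrix of odd size is symmetric.
theorem det_smul_adjugate (hM : IsAlternatingMatrix M) :
    IsAlternatingMatrix (M.det • M.adjugate) := by
  have hconj : Mᵀ.adjugate * Mᵀ * Mᵀ.adjugateᵀ = M.det • M.adjugate := by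
    rw [adjugate_mul, det_transpose, adjugate_transpose, transpose_transpose, smul_mul,
      Matrix.one_mul]
  exact hconj ▸ hM.transpose.mul_mul_transpose _

theorem sq_det_mul_adjugate_apply {M : Matrix (Fin 2 ⊕ n) (Fin 2 ⊕ n) R}
    (hM : IsAlternatingMatrix M) :
    (M.det * M.adjugate (.inl 0) (.inl 1)) ^ 2 = M.det ^ 3 * M.toBlocks₂₂.det := by
  calc
    _ = (M.det • M.adjugate.toBlocks₁₁).det :=
        (hM.det_smul_adjugate.submatrix Sum.inl).det_fin_two.symm
    _ = M.det * (M.det * M.adjugate.toBlocks₁₁.det) := by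
        rw [det_smul, Fintype.card_fin]
        ring
    _ = M.det ^ 3 * M.toBlocks₂₂.det := by
        rw [det_mul_det_toBlocks₁₁_adjugate, Fintype.card_fin]
        ring

end IsAlternatingMatrix

section PrincipalSubmatrix

variable {V R : Type*} [DecidableEq V] {B : Finset V}

/-- The splitting of `B` into two distinct elements `u`, `v` and the rest; it puts the rows and
columns `u`, `v` of `A[B]` in front of the block `A[B ∖ {u, v}]`. -/
noncomputable def pairSumSdiffEquiv {u v : ↥B} (huv : u ≠ v) :
    Fin 2 ⊕ ↥(B \ {u.1, v.1}) ≃ ↥B :=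
  Equiv.ofBijective (Sum.elim ![u, v] fun x => ⟨x, (mem_sdiff.1 x.2).1⟩) <| by
    constructor
    · refine Function.Injective.sumElim ?_ ?_ ?_
      · simpa [Fin.forall_fin_two, Function.Injective] using ⟨huv, huv.symm⟩
      · exact fun x y hxy => Subtype.ext (congrArg (fun z : ↥B => z.1) hxy)
      · intro i x hix
        have hpair : (![u, v] i).1 ∈ ({u.1, v.1} : Finset V) := by fin_cases i <;> simp
        rw [hix] at hpair
        exact (mem_sdiff.1 x.2).2 hpair
    · intro x
      by_cases hx : x.1 ∈ ({u.1, v.1} : Finset V)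
      · rw [mem_insert, mem_singleton] at hx
        obtain hx | hx := hx
        · exact ⟨.inl 0, Subtype.ext hx.symm⟩
        · exact ⟨.inl 1, Subtype.ext hx.symm⟩
      · exact ⟨.inr ⟨x, mem_sdiff.2 ⟨x.2, hx⟩⟩, rfl⟩

variable [CommRing R] {A : Matrix V V R}

theorem sq_det_mul_adjugate_principalSub (hA : IsAlternatingMatrix A) {u v : ↥B} (huv : u ≠ v) :
    ((principalSub A B).det * (principalSub A B).adjugate u v) ^ 2 =
      (principalSub A B).det ^ 3 * (principalSub A (B \ {u.1, v.1})).det := by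
  let e := pairSumSdiffEquiv huv
  have h := ((hA.submatrix Subtype.val).submatrix e).sq_det_mul_adjugate_apply
  rw [det_submatrix_equiv_self, adjugate_submatrix_equiv_self] at h
  exact h

theorem two_mul_card_le_of_det_sdiff_pair_eq_zero [IsReduced R] (hA : IsAlternatingMatrix A)
    (hB : (principalSub A B).det ≠ 0) {S : Finset V} (hSB : S ⊆ B)
    (hS : ∀ u ∈ S, ∀ v ∈ S, u ≠ v → (principalSub A (B \ {u, v})).det = 0) :
    2 * #S ≤ #B := by
  set M := principalSub A B
  have hdet : (M.det • M.adjugate).det ≠ 0 := by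
    rw [det_smul, det_adjugate, ← pow_add]
    exact pow_ne_zero _ hB
  have hzero : ∀ u ∈ S.subtype (· ∈ B), ∀ v ∈ S.subtype (· ∈ B), (M.det • M.adjugate) u v = 0 := by
    intro u hu v hv
    rw [mem_subtype] at hu hv
    obtain rfl | huv := eq_or_ne u v
    · exact (hA.submatrix _).det_smul_adjugate.diag u
    · refine eq_zero_of_pow_eq_zero (n := 2) ?_
      rw [Matrix.smul_apply, smul_eq_mul, sq_det_mul_adjugate_principalSub hA huv,
        hS u hu v hv (Subtype.coe_ne_coe.2 huv), mul_zero]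
  simpa [filter_true_of_mem hSB] using two_mul_card_le_of_det_ne_zero_of_block_eq_zero hdet hzero

end PrincipalSubmatrix

theorem stmt_9_general {R : Type*} [CommRing R] [IsReduced R] {V : Type*} [DecidableEq V]
    {A : Matrix V V R} (hA : IsAlternatingMatrix A) (T : Set V) [DecidablePred (· ∈ T)] {k : ℕ}
    (hmax : ∀ S : Finset V, (principalSub A S).det ≠ 0 → #{x ∈ S | x ∈ T} ≤ k)
    {B : Finset V} (hB : (principalSub A B).det ≠ 0) (hBT : #{x ∈ B | x ∈ T} = k)
    (hmin : ∀ B' ⊆ B, (principalSub A B').det ≠ 0 → #{x ∈ B' | x ∈ T} = k → B' = B) :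
    #B ≤ 2 * k ∧
    (∀ u ∈ B, u ∉ T → ∀ v ∉ T, (principalSub A (B \ {u, v})).det = 0) ∧
    (∀ u ∈ T, u ∉ B → ∀ v, (principalSub A (B ∪ {u, v})).det = 0) := by
  have hsdiff : ∀ u ∈ B, u ∉ T → ∀ v ∉ T, (principalSub A (B \ {u, v})).det = 0 := by
    intro u huB huT v hvT
    by_contra hdet
    have hinter : {x ∈ B \ {u, v} | x ∈ T} = {x ∈ B | x ∈ T} := by grind
    have heq := hmin _ sdiff_subset hdet (by rw [hinter, hBT])
    have hu : u ∈ B \ {u, v} := by rwa [heq]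
    simp at hu
  refine ⟨?_, hsdiff, fun u huT huB v => ?_⟩
  · have hcompl : 2 * #{x ∈ B | x ∉ T} ≤ #B :=
      two_mul_card_le_of_det_sdiff_pair_eq_zero hA hB (filter_subset _ B) (by grind)
    have hsplit := card_filter_add_card_filter_not (s := B) (· ∈ T)
    lia
  · by_contra hdet
    have hlt : {x ∈ B | x ∈ T} ⊂ {x ∈ B ∪ {u, v} | x ∈ T} := by
      rw [ssubset_iff_of_subset (by grind)]
      exact ⟨u, by grind⟩
    exact (hBT ▸ card_lt_card hlt).not_ge (hmax _ hdet)

/-- Structure after pivoting on a minimal max-intersection feasible set.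
Let `A` be skew-symmetric over `F` indexed by `V`, `T ⊆ V`, `k` the maximum of `|S ∩ T|`
over `S` with `A[S]` nonsingular, and `B` minimal under inclusion with `A[B]`
nonsingular and `|B ∩ T| = k`. Then (i) `|B| ≤ 2k`; (ii) for distinct `u, v ∈ B ∖ T`,
`A[B ∖ {u,v}]` is singular; (iii) for `u ∈ T ∖ B`, `v ∈ V ∖ B`, `u ≠ v`,
`A[B ∪ {u,v}]` is singular. -/
theorem stmt_9 {F : Type*} [Field F] {V : Type*} [Fintype V] [DecidableEq V]
    (A : Matrix V V F) (hskew : ∀ u v, A u v = - A v u) (hdiag : ∀ v, A v v = 0)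
    (T : Finset V) (k : ℕ)
    (hmax : ∀ S : Finset V, (principalSub A S).det ≠ 0 → (S ∩ T).card ≤ k)
    (hex : ∃ S : Finset V, (principalSub A S).det ≠ 0 ∧ (S ∩ T).card = k)
    (B : Finset V) (hB : (principalSub A B).det ≠ 0) (hBT : (B ∩ T).card = k)
    (hmin : ∀ B' ⊆ B, (principalSub A B').det ≠ 0 → (B' ∩ T).card = k → B' = B) :
    B.card ≤ 2 * k ∧
    (∀ u ∈ B \ T, ∀ v ∈ B \ T, u ≠ v → (principalSub A (B \ {u, v})).det = 0) ∧
    (∀ u ∈ T \ B, ∀ v : V, v ∉ B → u ≠ v → (principalSub A (B ∪ {u, v})).det = 0) := by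
  have h := stmt_9_general (B := B) ⟨hskew, hdiag⟩ (T : Set V) (k := k)
  simp only [mem_coe, filter_mem_eq_inter] at h
  grind
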